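/- Fix d ∈ ℕ, a non-empty bounded set F ⊂ ℝ^d, and a countable family {φ_i}_{i∈ℕ} of dimension functions. Then there exists a homogeneous Moran set M ⊂ ℝ^d such that dim_A^{φ_i} F = dim_A^{φ_i} M for all i ∈ ℕ, and dim_A M ≤ dim_A F. -/

import Mathlib

open Filter Metric Set Bornology MeasureTheory

noncomputable def coverNumber {X : Type*} [PseudoMetricSpace X] (E : Set X) (r : ℝ) : ENNReal :=
  sInf {n : ENNReal | ∃ S : Finset X, (S.card : ENNReal) = n ∧ E ⊆ ⋃ x ∈ S, Metric.ball x r}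

noncomputable def phiAssouad {X : Type*} [PseudoMetricSpace X] (F : Set X) (φ : ℝ → ℝ) : ℝ :=
  sInf {s : ℝ | 0 ≤ s ∧ ∃ C : ℝ, 0 < C ∧ ∀ R ∈ Set.Ioo (0:ℝ) 1, ∀ x ∈ F,
    coverNumber (F ∩ Metric.ball x R) (R ^ (1 + φ R)) ≤ ENNReal.ofReal (C * R ^ (-(φ R * s)))}

noncomputable def phiAssouadUpper {X : Type*} [PseudoMetricSpace X] (F : Set X) (φ : ℝ → ℝ) : ℝ :=
  sInf {s : ℝ | 0 ≤ s ∧ ∃ C : ℝ, 0 < C ∧ ∀ r R : ℝ, 0 < r → r ≤ R ^ (1 + φ R) →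
    R ^ (1 + φ R) ≤ R → R < 1 → ∀ x ∈ F,
    coverNumber (F ∩ Metric.ball x R) r ≤ ENNReal.ofReal (C * (R / r) ^ s)}

noncomputable def assouadDim {X : Type*} [PseudoMetricSpace X] (F : Set X) : ℝ :=
  sInf {s : ℝ | 0 ≤ s ∧ ∃ C : ℝ, 0 < C ∧ ∀ r R : ℝ, 0 < r → r ≤ R → R < 1 → ∀ x ∈ F,
    coverNumber (F ∩ Metric.ball x R) r ≤ ENNReal.ofReal (C * (R / r) ^ s)}

noncomputable def upperBoxDim {X : Type*} [PseudoMetricSpace X] (F : Set X) : ℝ :=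
  Filter.limsup (fun r : ℝ => Real.log (coverNumber F r).toReal / Real.log (1 / r))
    (nhdsWithin 0 (Set.Ioi 0))

def DoublingWith {X : Type*} [PseudoMetricSpace X] (F : Set X) (M : ℕ) : Prop :=
  ∀ x ∈ F, ∀ r : ℝ, 0 < r → ∃ S : Finset X, S.card ≤ M ∧
    F ∩ Metric.ball x r ⊆ ⋃ y ∈ S, Metric.ball y (r / 2)

def IsDimFunction (φ : ℝ → ℝ) : Prop :=
  (∀ R ∈ Set.Ioo (0:ℝ) 1, 0 < φ R) ∧
  (∀ R₁ ∈ Set.Ioo (0:ℝ) 1, ∀ R₂ ∈ Set.Ioo (0:ℝ) 1, R₁ ≤ R₂ →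
    φ R₂ * Real.log (1 / R₂) ≤ φ R₁ * Real.log (1 / R₁) ∧ φ R₁ ≤ φ R₂) ∧
  Filter.Tendsto (fun R => φ R * Real.log (1 / R)) (nhdsWithin 0 (Set.Ioo 0 1)) Filter.atTop

def moranMap (d : ℕ) (ρ : ℝ) (b : Fin d → Bool) (x : Fin d → ℝ) : Fin d → ℝ :=
  fun j => ρ * x j + (if b j then 1 - ρ else 0)

def moranComp (d : ℕ) (r : ℕ → ℝ) : ℕ → List (Fin d → Bool) → (Fin d → ℝ) → (Fin d → ℝ)
  | _, [], x => x
  | n, b :: σ, x => moranMap d (r n) b (moranComp d r (n + 1) σ x)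

def moranSet (d : ℕ) (r : ℕ → ℝ) : Set (Fin d → ℝ) :=
  ⋂ n : ℕ, ⋃ σ ∈ {l : List (Fin d → Bool) | l.length = n},
    moranComp d r 0 σ '' Set.Icc (0 : Fin d → ℝ) 1

def IsHomogeneousMoran (d : ℕ) (M : Set (Fin d → ℝ)) : Prop :=
  ∃ r : ℕ → ℝ, (∀ n, 0 < r n ∧ r n ≤ 1 / 2) ∧ M = moranSet d r

/-!
The set `M` is built so that the logarithm of its covering numbers imitates that of `F` along
a very sparse sequence of scale windows, and is constant in between.

**Dyadic counts.** Cut `Fin d → ℝ` into dyadic cubes of side `2⁻ⁿ` (level `n`, see `cell`). The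
number of level-`b` cubes met by `F` inside a level-`a` cube is comparable, up to a factor
`5 ^ d`, with the covering number of `F ∩ ball x R` by balls of radius `r`, where `R ≈ 2⁻ᵃ` and
`r ≈ 2⁻ᵇ`. In contrast with covering numbers, these counts are submultiplicative along successive
windows without any constant (`LocalCountLE.ncard_le`).

**Moran sets with dyadic ratios.** If the `n`-th generation pieces have side `2 ^ (-m n)`, their
lowest corners are `2 ^ (-m n)`-separated, whatever the ratios are. Hence the covering number
of the Moran set between the scales `2 ^ (-m k)` and `2 ^ (-m n)` is comparable with
`2 ^ (d * (n - k))` (`coverNumber_moranSet_le`, `le_of_coverNumber_moranSet_le`), and the set is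
governed by the function `c T = #{n ≥ 1 : m n ≤ T}`.

**Blocks.** Suppose `s < dim_A^φ F`. Then at arbitrarily small scales `R` there is a cube `Q` of
side about `R` in which `F` has at least `C * R ^ (-φ R * s)` cells of side about `R ^ (1 + φ R)`
(`exists_rich_cell`). Choose such cubes `Q k` one after the other, running through all indices `i`
and all members of a sequence increasing to `dim_A^{φ i} F`, and start each block of levels
`[a k, b k]` far later than the end of the previous one. On a block, let `c` follow the logarithm
in base `2 ^ d` of the number of level-`T` cells of `F ∩ Q k`; off the blocks `c` is constant,
except for one forced unit step at the end of each block, which makes `c` unbounded.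

**Lower bounds.** Over the whole block `k` the covering number of `M` is at least a constant times
the number of cells of `F ∩ Q k`, which yields `dim_A^{φ i} F ≤ dim_A^{φ i} M`
(`Blocks.le_phiAssouad_moran`).

**Upper bounds.** Over a window of levels `[s, t]` inside one block, the increment of `c` is bounded
by the local counts of `F` over the *same* window, by submultiplicativity. If the last block that
starts before `t` has index `m`, the preceding blocks contribute a factor of at most
`2 ^ (d * (e m - s))`, where `e m` is the end of block `m - 1` (`Blocks.window_le`). Since
`(m + 1) * e m ≤ a m < t`, this factor is bounded when `t ≤ K * (s + 1)`. The windows of a dimension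
function have this form, because `φ R * log₂ (1 / R) ≤ φ (1 / 2) * (log₂ (1 / R) + 1)`
(`IsDimFunction.mul_logb_le`); this gives `Blocks.phiAssouad_moran_le`. For arbitrary windows the
factor is at most a constant times `(R / r) ^ δ`, with `δ > 0` arbitrary, which is enough for the
Assouad dimension (`Blocks.assouadDim_moran_le`).
-/

/-! ### Dyadic cells and covering numbers -/

/-- The index of the half-open dyadic cube of side `2⁻ⁿ` containing `z`. -/
noncomputable def cell {d : ℕ} (n : ℕ) (z : Fin d → ℝ) : Fin d → ℤ := fun j => ⌊z j * 2 ^ n⌋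

/-- Every dyadic cube of level `a` contains at most `K` cubes of level `b` meeting `E`. The bound is
real-valued, since it is compared with powers of the radii. For `a ≤ b` the sets counted are finite,
so `Set.ncard` is the true cardinality. -/
def LocalCountLE {d : ℕ} (E : Set (Fin d → ℝ)) (a b : ℕ) (K : ℝ) : Prop :=
  ∀ q : Fin d → ℤ, ((cell b '' (E ∩ cell a ⁻¹' {q})).ncard : ℝ) ≤ K

/-- The indices of the level-`n` cubes whose index differs by at most `2` in each coordinate from
that of the cube containing `y`. It contains the cubes met by the open ball of radius `2 * 2⁻ⁿ`
around `y`. -/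
noncomputable def nbhd {d : ℕ} (n : ℕ) (y : Fin d → ℝ) : Finset (Fin d → ℤ) :=
  Fintype.piFinset fun j => Finset.Icc (cell n y j - 2) (cell n y j + 2)

lemma card_nbhd {d : ℕ} (n : ℕ) (y : Fin d → ℝ) : (nbhd n y).card = 5 ^ d := by
  simp only [nbhd, Fintype.card_piFinset, Int.card_Icc]
  rw [Finset.prod_congr rfl (g := fun _ => 5)]
  · simp
  · intro j _
    omega

lemma cell_mem_nbhd {d : ℕ} {n : ℕ} {y z : Fin d → ℝ} (h : dist z y < 2 * (1 / 2) ^ n) :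
    cell n z ∈ nbhd n y := by
  rw [nbhd, Fintype.mem_piFinset]
  intro j
  have h1 : |z j - y j| < 2 * (1 / 2) ^ n := lt_of_le_of_lt (dist_le_pi_dist z y j) h
  have h2 : |z j * 2 ^ n - y j * 2 ^ n| < 2 := by
    rw [← sub_mul, abs_mul, abs_of_pos (by positivity : (0 : ℝ) < 2 ^ n)]
    calc |z j - y j| * 2 ^ n < 2 * (1 / 2) ^ n * 2 ^ n := by gcongr
      _ = 2 := by rw [mul_assoc, ← mul_pow]; norm_num
  rw [abs_lt] at h2
  have h3 := Int.floor_le (y j * 2 ^ n)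
  have h4 := Int.lt_floor_add_one (y j * 2 ^ n)
  simp only [cell, Finset.mem_Icc]
  constructor
  · rw [Int.le_floor]; push_cast; linarith
  · rw [← Int.lt_add_one_iff, Int.floor_lt]; push_cast; linarith

lemma dist_lt_of_cell_eq {d : ℕ} {n : ℕ} {y z : Fin d → ℝ} (h : cell n z = cell n y) :
    dist z y < (1 / 2) ^ n := by
  rw [dist_pi_lt_iff (by positivity)]
  intro j
  have h1 := Int.abs_sub_lt_one_of_floor_eq_floor (congrFun h j)
  rw [← sub_mul, abs_mul, abs_of_pos (by positivity : (0 : ℝ) < 2 ^ n)] at h1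
  rw [Real.dist_eq, one_div, inv_pow, ← one_div, lt_div_iff₀ (by positivity)]
  exact h1

lemma cell_eq_div {d : ℕ} {a b : ℕ} (hab : a ≤ b) (z : Fin d → ℝ) (j : Fin d) :
    cell a z j = cell b z j / (2 ^ (b - a) : ℕ) := by
  simp only [cell]
  rw [← Int.floor_div_natCast]
  congr 1
  obtain ⟨c, rfl⟩ := Nat.exists_eq_add_of_le hab
  simp only [Nat.add_sub_cancel_left, pow_add]
  push_cast
  field_simp

lemma cell_eq_of_le {d : ℕ} {a b : ℕ} (hab : a ≤ b) {y z : Fin d → ℝ}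
    (h : cell b z = cell b y) : cell a z = cell a y := by
  funext j
  rw [cell_eq_div hab, cell_eq_div hab, h]

/-- The indices of the dyadic cubes `m` levels below the cube of index `q` that it contains. -/
noncomputable def subcells {d : ℕ} (m : ℕ) (q : Fin d → ℤ) : Finset (Fin d → ℤ) :=
  Fintype.piFinset fun j => Finset.Ico (q j * 2 ^ m) (q j * 2 ^ m + 2 ^ m)

lemma card_subcells {d : ℕ} (m : ℕ) (q : Fin d → ℤ) : (subcells m q).card = 2 ^ (d * m) := by
  simp only [subcells, Fintype.card_piFinset, Int.card_Ico]
  rw [Finset.prod_congr rfl (g := fun _ => 2 ^ m)]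
  · simp [← pow_mul, mul_comm]
  · intro j _
    simp only [add_sub_cancel_left]
    exact_mod_cast Int.toNat_natCast (2 ^ m)

lemma image_cell_subset {d : ℕ} {a b : ℕ} (hab : a ≤ b) (E : Set (Fin d → ℝ)) (q : Fin d → ℤ) :
    cell b '' (E ∩ cell a ⁻¹' {q}) ⊆ (subcells (b - a) q : Set (Fin d → ℤ)) := by
  rintro _ ⟨z, ⟨-, hz⟩, rfl⟩
  simp only [subcells, Finset.mem_coe, Fintype.mem_piFinset, Finset.mem_Ico]
  intro j
  have h1 := cell_eq_div hab z j
  rw [show cell a z = q from hz] at h1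
  have h2 : (0 : ℤ) < (2 ^ (b - a) : ℕ) := by positivity
  have h3 := Int.ediv_mul_le (cell b z j) h2.ne'
  have h4 := Int.lt_ediv_add_one_mul_self (cell b z j) h2
  rw [← h1] at h3 h4
  push_cast at h3 h4
  constructor <;> linarith

lemma finite_image_cell {d : ℕ} {a b : ℕ} (hab : a ≤ b) (E : Set (Fin d → ℝ)) (q : Fin d → ℤ) :
    (cell b '' (E ∩ cell a ⁻¹' {q})).Finite :=
  (Finset.finite_toSet _).subset (image_cell_subset hab E q)

lemma localCountLE_pow {d : ℕ} (E : Set (Fin d → ℝ)) {a b : ℕ} (hab : a ≤ b) :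
    LocalCountLE E a b (2 ^ (d * (b - a))) := by
  intro q
  have := Set.ncard_le_ncard (image_cell_subset hab E q) (Finset.finite_toSet _)
  rw [Set.ncard_coe_finset, card_subcells] at this
  exact_mod_cast this

lemma LocalCountLE.one_le {d : ℕ} {E : Set (Fin d → ℝ)} (hE : E.Nonempty) {a b : ℕ} {K : ℝ}
    (h : LocalCountLE E a b K) : 1 ≤ K := by
  obtain ⟨z, hz⟩ := hE
  refine le_trans ?_ (h (cell a z))
  have hfin : (cell b '' (E ∩ cell a ⁻¹' {cell a z})).Finite := by
    rcases le_total a b with hab | hba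
    · exact finite_image_cell hab E _
    · refine (Set.finite_singleton (cell b z)).subset ?_
      rintro _ ⟨y, hy, rfl⟩
      exact cell_eq_of_le hba hy.2
  have : 0 < (cell b '' (E ∩ cell a ⁻¹' {cell a z})).ncard :=
    (Set.ncard_pos hfin).2 ⟨_, z, ⟨hz, rfl⟩, rfl⟩
  exact_mod_cast this

lemma ncard_image_cell_mono {d : ℕ} {a b : ℕ} (hab : a ≤ b) {X : Set (Fin d → ℝ)}
    (hX : (cell b '' X).Finite) : (cell a '' X).ncard ≤ (cell b '' X).ncard := by
  have : cell a '' X =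
      (fun (q : Fin d → ℤ) j => q j / ((2 ^ (b - a) : ℕ) : ℤ)) '' (cell b '' X) := by
    rw [Set.image_image]
    refine Set.image_congr fun z _ => ?_
    funext j
    exact cell_eq_div hab z j
  rw [this]
  exact Set.ncard_image_le hX

/-- A bound on the local counts over a window of levels holds over each of its subwindows. -/
lemma LocalCountLE.mono {d : ℕ} {E : Set (Fin d → ℝ)} {a a' b' b : ℕ} {K : ℝ}
    (h : LocalCountLE E a b K) (h1 : a ≤ a') (h2 : a' ≤ b') (h3 : b' ≤ b) :
    LocalCountLE E a' b' K := by
  intro q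
  rcases (E ∩ cell a' ⁻¹' {q}).eq_empty_or_nonempty with h0 | ⟨x, hx⟩
  · rw [h0, Set.image_empty, Set.ncard_empty, Nat.cast_zero]
    exact (Nat.cast_nonneg _).trans (h 0)
  · refine le_trans ?_ (h (cell a x))
    have hf := finite_image_cell (h1.trans (h2.trans h3)) E (cell a x)
    have hs : E ∩ cell a' ⁻¹' {q} ⊆ E ∩ cell a ⁻¹' {cell a x} := fun z hz =>
      ⟨hz.1, cell_eq_of_le h1 (hz.2.trans hx.2.symm)⟩
    have h4 := ncard_image_cell_mono h3 (hf.subset (Set.image_mono hs))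
    have h5 := Set.ncard_le_ncard (Set.image_mono (f := cell b) hs) hf
    exact_mod_cast h4.trans h5

/-- Submultiplicativity of the counts: passing from level `b` to level `c` multiplies the number of
cells by at most the local count over this window. -/
lemma LocalCountLE.ncard_le {d : ℕ} {E X : Set (Fin d → ℝ)} (hX : X ⊆ E) {b c : ℕ} {K : ℝ}
    (hbc : b ≤ c) (h : LocalCountLE E b c K) (hf : (cell b '' X).Finite) :
    ((cell c '' X).ncard : ℝ) ≤ (cell b '' X).ncard * K := by
  classical
  set N := ⌊K⌋₊
  have hK : 0 ≤ K := (Nat.cast_nonneg _).trans (h 0)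
  have h1 : cell c '' X ⊆ ((hf.toFinset.biUnion fun q => (finite_image_cell hbc E q).toFinset :
      Finset (Fin d → ℤ)) : Set (Fin d → ℤ)) := by
    rintro _ ⟨z, hz, rfl⟩
    simp only [Finset.coe_biUnion, Set.Finite.coe_toFinset, Set.mem_iUnion]
    exact ⟨cell b z, ⟨z, hz, rfl⟩, z, ⟨hX hz, rfl⟩, rfl⟩
  have h2 := Set.ncard_le_ncard h1 (Finset.finite_toSet _)
  rw [Set.ncard_coe_finset] at h2
  have h3 := h2.trans (Finset.card_biUnion_le_card_mul _ _ N fun q _ => by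
    rw [← Set.ncard_eq_toFinset_card _ (finite_image_cell hbc E q)]
    exact Nat.le_floor (h q))
  rw [← Set.ncard_eq_toFinset_card _ hf] at h3
  calc ((cell c '' X).ncard : ℝ) ≤ ((cell b '' X).ncard * N : ℕ) := by exact_mod_cast h3
    _ ≤ _ := by push_cast; gcongr; exact Nat.floor_le hK

/-- A bound on the `ENNReal`-valued covering number is the existence of a cover of that size. -/
lemma coverNumber_le_iff {X : Type*} [PseudoMetricSpace X] {E : Set X} {r V : ℝ} (hV : 0 ≤ V) :
    coverNumber E r ≤ ENNReal.ofReal V ↔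
      ∃ S : Finset X, (S.card : ℝ) ≤ V ∧ E ⊆ ⋃ x ∈ S, Metric.ball x r := by
  constructor
  · intro h
    have hne : ∃ n : ℕ, ∃ S : Finset X, S.card = n ∧ E ⊆ ⋃ x ∈ S, Metric.ball x r := by
      by_contra! hcon
      have : coverNumber E r = ⊤ := by
        rw [coverNumber, sInf_eq_top]
        rintro _ ⟨S, -, hS⟩
        exact absurd hS (hcon _ S rfl)
      rw [this] at h
      exact ENNReal.ofReal_ne_top (top_le_iff.1 h)
    classical
    obtain ⟨S, hS, hS'⟩ := Nat.find_spec hne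
    refine ⟨S, ?_, hS'⟩
    have h1 : (S.card : ENNReal) ≤ coverNumber E r := by
      refine le_sInf ?_
      rintro _ ⟨T, rfl, hT⟩
      rw [hS]
      exact_mod_cast Nat.find_min' hne ⟨T, rfl, hT⟩
    have h2 := h1.trans h
    rw [← ENNReal.ofReal_natCast, ENNReal.ofReal_le_ofReal_iff hV] at h2
    exact h2
  · rintro ⟨S, hS, hS'⟩
    have h1 : coverNumber E r ≤ (S.card : ENNReal) := sInf_le ⟨S, rfl, hS'⟩
    refine h1.trans ?_
    rw [← ENNReal.ofReal_natCast]
    exact ENNReal.ofReal_le_ofReal hS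

/-- The lowest corner of the level-`n` dyadic cube of index `q`. -/
noncomputable def corner {d : ℕ} (n : ℕ) (q : Fin d → ℤ) : Fin d → ℝ := fun j => q j / 2 ^ n

lemma cell_corner {d : ℕ} (n : ℕ) (q : Fin d → ℤ) : cell n (corner n q) = q := by
  funext j
  simp [cell, corner]

/-- Local counts bound covering numbers: a ball of radius at most `2⁻ᵃ` meets at most `5 ^ d` cubes
of level `a`, and each cube of level `b` lies in a ball of radius `2⁻ᵇ`. -/
lemma LocalCountLE.coverNumber_le {d : ℕ} {E : Set (Fin d → ℝ)} {a b : ℕ} {K R r : ℝ}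
    (h : LocalCountLE E a b K) (hab : a ≤ b) (hR : R ≤ (1 / 2) ^ a) (hr : (1 / 2) ^ b ≤ r)
    (x : Fin d → ℝ) : coverNumber (E ∩ ball x R) r ≤ ENNReal.ofReal (5 ^ d * K) := by
  classical
  have hK : 0 ≤ K := (Nat.cast_nonneg _).trans (h 0)
  rw [coverNumber_le_iff (by positivity)]
  refine ⟨((nbhd a x).biUnion fun q => (finite_image_cell hab E q).toFinset).image (corner b),
    ?_, ?_⟩
  · have h3 := (Finset.card_image_le (f := corner b)).trans
      (Finset.card_biUnion_le_card_mul (nbhd a x)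
        (fun q => (finite_image_cell hab E q).toFinset) ⌊K⌋₊ fun q _ => by
        rw [← Set.ncard_eq_toFinset_card _ (finite_image_cell hab E q)]
        exact Nat.le_floor (h q))
    rw [card_nbhd] at h3
    calc _ ≤ ((5 ^ d * ⌊K⌋₊ : ℕ) : ℝ) := by exact_mod_cast h3
      _ ≤ _ := by push_cast; gcongr; exact Nat.floor_le hK
  · rintro z ⟨hz, hzx⟩
    have hp : (0 : ℝ) < (1 / 2) ^ a := by positivity
    have hza : cell a z ∈ nbhd a x := cell_mem_nbhd (by
      have := mem_ball.1 hzx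
      linarith)
    simp only [Set.mem_iUnion]
    refine ⟨corner b (cell b z), ?_, ?_⟩
    · refine Finset.mem_image_of_mem _ (Finset.mem_biUnion.2 ⟨_, hza, ?_⟩)
      rw [Set.Finite.mem_toFinset]
      exact ⟨z, ⟨hz, rfl⟩, rfl⟩
    · exact (dist_lt_of_cell_eq (cell_corner b _).symm).trans_le hr

/-- Covering numbers bound local counts: a cube of level `a` lies in the ball of radius `2⁻ᵃ` around
any of its points, and a ball of radius at most `2⁻ᵇ` meets at most `5 ^ d` cubes of level `b`. -/
lemma localCountLE_of_coverNumber {d : ℕ} {E : Set (Fin d → ℝ)} {a b : ℕ} {V R r : ℝ}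
    (hV : 0 ≤ V) (hR : (1 / 2) ^ a ≤ R) (hr : r ≤ (1 / 2) ^ b)
    (h : ∀ x ∈ E, coverNumber (E ∩ ball x R) r ≤ ENNReal.ofReal V) :
    LocalCountLE E a b (5 ^ d * V) := by
  classical
  intro q
  rcases (E ∩ cell a ⁻¹' {q}).eq_empty_or_nonempty with h0 | ⟨x, hx⟩
  · rw [h0, Set.image_empty, Set.ncard_empty]
    push_cast
    positivity
  obtain ⟨S, hS, hSc⟩ := (coverNumber_le_iff hV).1 (h x hx.1)
  have h1 : cell b '' (E ∩ cell a ⁻¹' {q}) ⊆ ((S.biUnion fun s => nbhd b s :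
      Finset (Fin d → ℤ)) : Set (Fin d → ℤ)) := by
    rintro _ ⟨z, hz, rfl⟩
    have hzx : z ∈ E ∩ ball x R :=
      ⟨hz.1, (dist_lt_of_cell_eq (hz.2.trans hx.2.symm)).trans_le hR⟩
    have hz' := hSc hzx
    simp only [Set.mem_iUnion] at hz'
    obtain ⟨s, hs, hzs⟩ := hz'
    have hp : (0 : ℝ) < (1 / 2) ^ b := by positivity
    rw [Finset.mem_coe, Finset.mem_biUnion]
    exact ⟨s, hs, cell_mem_nbhd (by have := mem_ball.1 hzs; linarith)⟩
  have h2 := Set.ncard_le_ncard h1 (Finset.finite_toSet _)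
  rw [Set.ncard_coe_finset] at h2
  have h3 := h2.trans (Finset.card_biUnion_le_card_mul _ _ (5 ^ d) fun s _ =>
    (card_nbhd b s).le)
  calc _ ≤ ((S.card * 5 ^ d : ℕ) : ℝ) := by exact_mod_cast h3
    _ ≤ _ := by push_cast; rw [mul_comm]; gcongr

/-! ### Moran sets with dyadic ratios -/

lemma prod_shift (r : ℕ → ℝ) (n l : ℕ) :
    ∏ i ∈ Finset.range (l + 1), r (n + i) = r n * ∏ i ∈ Finset.range l, r (n + 1 + i) := by
  rw [Finset.prod_range_succ', mul_comm, add_zero]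
  congr 1
  exact Finset.prod_congr rfl fun i _ => by rw [add_assoc, add_comm 1 i]

lemma moranComp_append {d : ℕ} (r : ℕ → ℝ) (σ τ : List (Fin d → Bool)) (n : ℕ)
    (x : Fin d → ℝ) :
    moranComp d r n (σ ++ τ) x = moranComp d r n σ (moranComp d r (n + σ.length) τ x) := by
  induction σ generalizing n with
  | nil => simp [moranComp]
  | cons b σ ih =>
    simp only [List.cons_append, moranComp, ih, List.length_cons]
    rw [show n + 1 + σ.length = n + (σ.length + 1) by ring]

lemma moranComp_mem_Icc {d : ℕ} {r : ℕ → ℝ} (hr : ∀ n, 0 < r n ∧ r n ≤ 1 / 2)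
    (σ : List (Fin d → Bool)) (n : ℕ) {x : Fin d → ℝ} (hx : x ∈ Set.Icc (0 : Fin d → ℝ) 1) :
    moranComp d r n σ x ∈ Set.Icc (0 : Fin d → ℝ) 1 := by
  induction σ generalizing n with
  | nil => simpa [moranComp] using hx
  | cons b σ ih =>
    obtain ⟨h0, h1⟩ := ih (n + 1)
    obtain ⟨hr0, hr1⟩ := hr n
    constructor <;> intro j
    · have := h0 j
      simp only [moranComp, moranMap, Pi.zero_apply] at this ⊢
      split_ifs <;> nlinarith
    · have := h1 j
      simp only [moranComp, moranMap, Pi.one_apply] at this ⊢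
      split_ifs <;> nlinarith

/-- Coordinatewise, `moranComp d r n σ` is the homothety whose ratio is the product of the ratios
used, followed by translation by its value at `0`. -/
lemma moranComp_apply {d : ℕ} (r : ℕ → ℝ) (σ : List (Fin d → Bool)) (n : ℕ)
    (x : Fin d → ℝ) (j : Fin d) :
    moranComp d r n σ x j =
      (∏ i ∈ Finset.range σ.length, r (n + i)) * x j + moranComp d r n σ 0 j := by
  induction σ generalizing n with
  | nil => simp [moranComp]
  | cons b σ ih =>
    simp only [moranComp, moranMap, List.length_cons]
    rw [ih, prod_shift]
    ring

lemma moranComp_zero_nonneg {d : ℕ} {r : ℕ → ℝ} (hr : ∀ n, 0 < r n ∧ r n ≤ 1 / 2)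
    (σ : List (Fin d → Bool)) (n : ℕ) (j : Fin d) : 0 ≤ moranComp d r n σ 0 j :=
  (moranComp_mem_Icc hr σ n (x := 0) ⟨le_rfl, zero_le_one⟩).1 j

lemma moranComp_zero_le {d : ℕ} {r : ℕ → ℝ} (hr : ∀ n, 0 < r n ∧ r n ≤ 1 / 2)
    (σ : List (Fin d → Bool)) (n : ℕ) (j : Fin d) :
    moranComp d r n σ 0 j ≤ 1 - ∏ i ∈ Finset.range σ.length, r (n + i) := by
  have h := (moranComp_mem_Icc hr σ n (x := 1) ⟨zero_le_one, le_rfl⟩).2 j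
  rw [moranComp_apply] at h
  simp only [Pi.one_apply] at h
  linarith

/-- The lowest corners of two distinct pieces of the same generation differ, in some coordinate, by
at least the side of the pieces. This uses only that the ratios are at most `1 / 2`. -/
lemma moranComp_separated {d : ℕ} {r : ℕ → ℝ} (hr : ∀ n, 0 < r n ∧ r n ≤ 1 / 2)
    (σ τ : List (Fin d → Bool)) (n : ℕ) (hl : σ.length = τ.length) (hne : σ ≠ τ) :
    ∃ j, ∏ i ∈ Finset.range σ.length, r (n + i) ≤
      |moranComp d r n σ 0 j - moranComp d r n τ 0 j| := by
  induction σ generalizing n τ with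
  | nil => exact absurd (List.length_eq_zero_iff.1 hl.symm).symm hne
  | cons b σ ih =>
    cases τ with
    | nil => simp at hl
    | cons c τ =>
      simp only [List.length_cons, add_left_inj] at hl
      obtain ⟨hr0, hr1⟩ := hr n
      simp only [List.length_cons, prod_shift, moranComp, moranMap]
      by_cases hbc : b = c
      · subst hbc
        obtain ⟨j, hj⟩ := ih τ (n + 1) hl (fun h => hne (by rw [h]))
        refine ⟨j, ?_⟩
        rw [add_sub_add_right_eq_sub, ← mul_sub, abs_mul, abs_of_pos hr0]
        gcongr
      · obtain ⟨j, hj⟩ := Function.ne_iff.1 hbc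
        refine ⟨j, ?_⟩
        have h1 := moranComp_zero_nonneg hr σ (n + 1) j
        have h2 := moranComp_zero_le hr σ (n + 1) j
        have h3 := moranComp_zero_nonneg hr τ (n + 1) j
        have h4 := moranComp_zero_le hr τ (n + 1) j
        rw [← hl] at h4
        set p := ∏ i ∈ Finset.range σ.length, r (n + 1 + i)
        rcases hb : b j <;> rcases hc : c j
        · simp [hb, hc] at hj
        · refine le_trans ?_ (neg_le_abs _)
          simp only [Bool.false_eq_true, if_true, if_false]
          nlinarith
        · refine le_trans ?_ (le_abs_self _)
          simp only [Bool.false_eq_true, if_true, if_false]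
          nlinarith
        · simp [hb, hc] at hj

lemma mem_moranSet {d : ℕ} {r : ℕ → ℝ} {x : Fin d → ℝ} :
    x ∈ moranSet d r ↔ ∀ n, ∃ σ : List (Fin d → Bool), σ.length = n ∧
      ∃ y ∈ Set.Icc (0 : Fin d → ℝ) 1, moranComp d r 0 σ y = x := by
  simp [moranSet]

lemma moranComp_zero_mem {d : ℕ} {r : ℕ → ℝ} (hr : ∀ n, 0 < r n ∧ r n ≤ 1 / 2)
    (σ : List (Fin d → Bool)) : moranComp d r 0 σ 0 ∈ moranSet d r := by
  have h01 : (0 : Fin d → ℝ) ∈ Set.Icc (0 : Fin d → ℝ) 1 := ⟨le_rfl, zero_le_one⟩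
  rw [mem_moranSet]
  intro n
  rcases le_total n σ.length with h | h
  · refine ⟨σ.take n, by simp [h], moranComp d r (0 + (σ.take n).length) (σ.drop n) 0,
      moranComp_mem_Icc hr _ _ h01, ?_⟩
    rw [← moranComp_append, List.take_append_drop]
  · refine ⟨σ ++ List.replicate (n - σ.length) (fun _ => false), by simp [h], 0, h01, ?_⟩
    rw [moranComp_append]
    congr 1
    generalize 0 + σ.length = k
    induction n - σ.length generalizing k with
    | zero => simp [moranComp]
    | succ l ih =>
      rw [List.replicate_succ, moranComp, ih]
      funext j
      simp [moranMap]

lemma moranSet_nonempty {d : ℕ} {r : ℕ → ℝ} (hr : ∀ n, 0 < r n ∧ r n ≤ 1 / 2) :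
    (moranSet d r).Nonempty := ⟨_, moranComp_zero_mem hr []⟩

/-- The words of length `n` in the alphabet `{0, 1}ᵈ`. -/
noncomputable def words (d n : ℕ) : Finset (List (Fin d → Bool)) :=
  (List.finite_length_eq (Fin d → Bool) n).toFinset

lemma mem_words {d n : ℕ} {σ : List (Fin d → Bool)} : σ ∈ words d n ↔ σ.length = n := by
  simp [words]

lemma card_words (d n : ℕ) : (words d n).card = 2 ^ (d * n) := by
  have h : (words d n : Set (List (Fin d → Bool))) =
      Set.range (Subtype.val : List.Vector (Fin d → Bool) n → List (Fin d → Bool)) := by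
    ext σ
    simp [mem_words]
  rw [← Set.ncard_coe_finset, h, ← Set.image_univ, Set.ncard_image_of_injective _
    Subtype.val_injective, Set.ncard_univ]
  change Nat.card (List.Vector (Fin d → Bool) n) = _
  rw [Nat.card_eq_fintype_card, card_vector]
  simp [← pow_mul]

/-- The contraction ratios for which the pieces of generation `n` have side `2 ^ (-m n)`, when `m`
is increasing and `m 0 = 0`. -/
noncomputable def dyadicRatio (m : ℕ → ℕ) (n : ℕ) : ℝ := (1 / 2) ^ (m (n + 1) - m n)

lemma dyadicRatio_bounds {m : ℕ → ℕ} (hm : StrictMono m) (n : ℕ) :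
    0 < dyadicRatio m n ∧ dyadicRatio m n ≤ 1 / 2 := by
  refine ⟨by unfold dyadicRatio; positivity, ?_⟩
  have hlt : m n < m (n + 1) := hm (Nat.lt_succ_self n)
  have : 1 ≤ m (n + 1) - m n := by omega
  calc dyadicRatio m n ≤ (1 / 2) ^ 1 :=
        pow_le_pow_of_le_one (by norm_num) (by norm_num) this
    _ = 1 / 2 := pow_one _

lemma prod_dyadicRatio {m : ℕ → ℕ} (hm : StrictMono m) (h0 : m 0 = 0) (l : ℕ) :
    ∏ i ∈ Finset.range l, dyadicRatio m (0 + i) = (1 / 2) ^ m l := by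
  induction l with
  | zero => simp [h0]
  | succ l ih =>
    rw [Finset.prod_range_succ, ih, dyadicRatio, zero_add, ← pow_add]
    congr 1
    have : m l < m (l + 1) := hm (Nat.lt_succ_self l)
    omega

/-- Distinct pieces of the same generation have their lowest corners in distinct dyadic cubes of the
same side. -/
lemma cell_moranComp_injOn {d : ℕ} {m : ℕ → ℕ} (hm : StrictMono m) (h0 : m 0 = 0)
    {σ τ : List (Fin d → Bool)} (hl : σ.length = τ.length)
    (h : cell (m σ.length) (moranComp d (dyadicRatio m) 0 σ 0) =
      cell (m σ.length) (moranComp d (dyadicRatio m) 0 τ 0)) : σ = τ := by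
  by_contra hne
  obtain ⟨j, hj⟩ := moranComp_separated (dyadicRatio_bounds hm) σ τ 0 hl hne
  rw [prod_dyadicRatio hm h0] at hj
  have h1 := dist_lt_of_cell_eq h
  have h2 := dist_le_pi_dist (moranComp d (dyadicRatio m) 0 σ 0)
    (moranComp d (dyadicRatio m) 0 τ 0) j
  rw [Real.dist_eq] at h2
  linarith

lemma dist_moranComp_le {d : ℕ} {m : ℕ → ℕ} (hm : StrictMono m) (h0 : m 0 = 0)
    (σ : List (Fin d → Bool)) {y z : Fin d → ℝ} (hy : y ∈ Set.Icc (0 : Fin d → ℝ) 1)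
    (hz : z ∈ Set.Icc (0 : Fin d → ℝ) 1) :
    dist (moranComp d (dyadicRatio m) 0 σ y) (moranComp d (dyadicRatio m) 0 σ z) ≤
      (1 / 2) ^ m σ.length := by
  rw [dist_pi_le_iff (by positivity)]
  intro j
  rw [moranComp_apply _ _ _ y, moranComp_apply _ _ _ z, prod_dyadicRatio hm h0, Real.dist_eq,
    add_sub_add_right_eq_sub, ← mul_sub, abs_mul, abs_of_pos (by positivity)]
  have h1 := hy.1 j
  have h2 := hy.2 j
  have h3 := hz.1 j
  have h4 := hz.2 j
  simp only [Pi.zero_apply, Pi.one_apply] at h1 h2 h3 h4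
  have : |y j - z j| ≤ 1 := abs_le.2 ⟨by linarith, by linarith⟩
  exact mul_le_of_le_one_right (by positivity) this

/-- Upper bound for the covering numbers of a Moran set: a ball of radius at most `2 ^ (-m k)` meets
at most `5 ^ d` pieces of generation `k`, and each of them has `2 ^ (d * (n - k))` descendants of
generation `n`. -/
lemma coverNumber_moranSet_le {d : ℕ} {m : ℕ → ℕ} (hm : StrictMono m) (h0 : m 0 = 0)
    {k n : ℕ} (hkn : k ≤ n) {R r : ℝ} (hR : R ≤ (1 / 2) ^ m k) (hr : (1 / 2) ^ m n < r)
    (x : Fin d → ℝ) :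
    coverNumber (moranSet d (dyadicRatio m) ∩ ball x R) r ≤
      ENNReal.ofReal (5 ^ d * 2 ^ (d * (n - k))) := by
  classical
  have h01 : (0 : Fin d → ℝ) ∈ Set.Icc (0 : Fin d → ℝ) 1 := ⟨le_rfl, zero_le_one⟩
  have hb := dyadicRatio_bounds hm
  set ρ := dyadicRatio m
  rw [coverNumber_le_iff (by positivity)]
  set W := (words d k).filter fun σ => cell (m k) (moranComp d ρ 0 σ 0) ∈ nbhd (m k) x
  have hW : W.card ≤ 5 ^ d := by
    rw [← card_nbhd (m k) x]
    refine Finset.card_le_card_of_injOn (fun σ => cell (m k) (moranComp d ρ 0 σ 0))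
      (fun σ hσ => (Finset.mem_filter.1 hσ).2) ?_
    intro σ hσ τ hτ h
    have h1 := mem_words.1 (Finset.mem_filter.1 hσ).1
    have h2 := mem_words.1 (Finset.mem_filter.1 hτ).1
    exact cell_moranComp_injOn hm h0 (h1.trans h2.symm) (by rw [h1]; exact h)
  refine ⟨(W ×ˢ words d (n - k)).image fun p => moranComp d ρ 0 (p.1 ++ p.2) 0, ?_, ?_⟩
  · have := (Finset.card_image_le (s := W ×ˢ words d (n - k))
      (f := fun p => moranComp d ρ 0 (p.1 ++ p.2) 0))
    rw [Finset.card_product, card_words] at this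
    exact_mod_cast this.trans (Nat.mul_le_mul_right _ hW)
  · rintro z ⟨hz, hzx⟩
    obtain ⟨σ, hσ, y, hy, rfl⟩ := mem_moranSet.1 hz n
    have hσk : (σ.take k).length = k := by simp [hσ, hkn]
    simp only [Set.mem_iUnion]
    refine ⟨moranComp d ρ 0 σ 0, Finset.mem_image.2 ⟨(σ.take k, σ.drop k),
      Finset.mem_product.2 ⟨Finset.mem_filter.2 ⟨mem_words.2 hσk, ?_⟩,
        mem_words.2 (by simp [hσ])⟩, by rw [List.take_append_drop]⟩, ?_⟩
    · refine cell_mem_nbhd ?_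
      have h1 := dist_moranComp_le hm h0 (σ.take k) h01
        (moranComp_mem_Icc hb (σ.drop k) (0 + (σ.take k).length) hy)
      rw [← moranComp_append, List.take_append_drop, hσk] at h1
      have h2 := dist_triangle (moranComp d ρ 0 (σ.take k) 0) (moranComp d ρ 0 σ y) x
      have h3 := mem_ball.1 hzx
      linarith
    · have := dist_moranComp_le hm h0 σ hy h01
      rw [hσ] at this
      exact this.trans_lt hr

/-- Lower bound for the covering numbers of a Moran set: a ball of radius larger than `2 ^ (-m k)`
centred in the set contains a piece of generation `k`, whose descendants of generation `n` have
separated corners. For `n < k` the exponent is truncated to `0`. -/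
lemma le_of_coverNumber_moranSet_le {d : ℕ} {m : ℕ → ℕ} (hm : StrictMono m) (h0 : m 0 = 0)
    {k n : ℕ} {R r : ℝ} (hR : (1 / 2) ^ m k < R) (hr : r ≤ (1 / 2) ^ m n)
    {x : Fin d → ℝ} (hx : x ∈ moranSet d (dyadicRatio m)) {V : ℝ} (hV : 0 ≤ V)
    (h : coverNumber (moranSet d (dyadicRatio m) ∩ ball x R) r ≤ ENNReal.ofReal V) :
    (2 : ℝ) ^ (d * (n - k)) ≤ 5 ^ d * V := by
  classical
  have h01 : (0 : Fin d → ℝ) ∈ Set.Icc (0 : Fin d → ℝ) 1 := ⟨le_rfl, zero_le_one⟩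
  have hb := dyadicRatio_bounds hm
  obtain ⟨S, hS, hSc⟩ := (coverNumber_le_iff hV).1 h
  rcases lt_or_ge n k with hnk | hkn
  · -- here the truncated exponent vanishes, and the cover of `x` itself is non-empty
    have hR0 : 0 < R := lt_trans (by positivity) hR
    have h1 := hSc ⟨hx, mem_ball_self hR0⟩
    simp only [Set.mem_iUnion] at h1
    obtain ⟨s, hs, -⟩ := h1
    have h2 : (1 : ℝ) ≤ S.card := by exact_mod_cast Finset.card_pos.2 ⟨s, hs⟩
    have h3 : (1 : ℝ) ≤ 5 ^ d := one_le_pow₀ (by norm_num)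
    rw [Nat.sub_eq_zero_of_le hnk.le, mul_zero, pow_zero]
    nlinarith
  set ρ := dyadicRatio m
  obtain ⟨σ, hσ, y, hy, hyx⟩ := mem_moranSet.1 hx k
  have hsub : words d (n - k) ⊆ S.biUnion fun s => (words d (n - k)).filter fun τ =>
      cell (m n) (moranComp d ρ 0 (σ ++ τ) 0) ∈ nbhd (m n) s := by
    intro τ hτ
    have h1 := dist_moranComp_le hm h0 σ
      (moranComp_mem_Icc hb τ (0 + σ.length) h01) hy
    rw [← moranComp_append, hyx, hσ] at h1
    have h2 := hSc ⟨moranComp_zero_mem hb (σ ++ τ), mem_ball.2 (h1.trans_lt hR)⟩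
    simp only [Set.mem_iUnion] at h2
    obtain ⟨s, hs, hds⟩ := h2
    refine Finset.mem_biUnion.2 ⟨s, hs, Finset.mem_filter.2 ⟨hτ, cell_mem_nbhd ?_⟩⟩
    have hp : (0 : ℝ) < (1 / 2) ^ m n := by positivity
    have := mem_ball.1 hds
    linarith
  have h2 := (Finset.card_le_card hsub).trans
    (Finset.card_biUnion_le_card_mul _ _ (5 ^ d) fun s _ => by
      rw [← card_nbhd (m n) s]
      refine Finset.card_le_card_of_injOn (fun τ => cell (m n) (moranComp d ρ 0 (σ ++ τ) 0))
        (fun τ hτ => (Finset.mem_filter.1 hτ).2) ?_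
      intro τ hτ τ' hτ' heq
      have h1 := mem_words.1 (Finset.mem_filter.1 hτ).1
      have h2 := mem_words.1 (Finset.mem_filter.1 hτ').1
      have h3 : (σ ++ τ).length = n := by rw [List.length_append, hσ, h1]; omega
      have h4 : (σ ++ τ').length = n := by rw [List.length_append, hσ, h2]; omega
      exact List.append_cancel_left
        (cell_moranComp_injOn hm h0 (h3.trans h4.symm) (by rw [h3]; exact heq)))
  rw [card_words] at h2
  calc (2 : ℝ) ^ (d * (n - k)) ≤ ((S.card * 5 ^ d : ℕ) : ℝ) := by exact_mod_cast h2
    _ ≤ _ := by push_cast; rw [mul_comm]; gcongr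

/-! ### Blocks of levels -/

/-- A sparse sequence of blocks of levels `[a k, b k]`, each with a dyadic cube `q k` of level `a k`
meeting `F`. The number `e k` is the first level after all the blocks before the `k`-th one, and
block `k` starts no earlier than level `(k + 1) * e k`. -/
structure Blocks {d : ℕ} (F : Set (Fin d → ℝ)) where
  /-- The first level of each block. -/
  a : ℕ → ℕ
  /-- The last level of each block. -/
  b : ℕ → ℕ
  /-- The level following the end of the previous block, and `0` for the first block. -/
  e : ℕ → ℕ
  /-- The index of the cube of each block. -/
  q : ℕ → Fin d → ℤ
  e_zero : e 0 = 0
  e_succ : ∀ k, e (k + 1) = b k + 1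
  sparse : ∀ k, (k + 1) * e k ≤ a k
  a_le_b : ∀ k, a k ≤ b k
  nonempty : ∀ k, (F ∩ cell (a k) ⁻¹' {q k}).Nonempty

namespace Blocks

variable {d : ℕ} {F : Set (Fin d → ℝ)} (B : Blocks F)

/-- The number of level-`T` cells met by `F` inside the cube `q k`. -/
noncomputable def cnt (k T : ℕ) : ℕ := (cell T '' (F ∩ cell (B.a k) ⁻¹' {B.q k})).ncard

/-- The integer part of the logarithm in base `2 ^ d` of `B.cnt k T`. -/
noncomputable def height (k T : ℕ) : ℕ := Nat.log (2 ^ d) (B.cnt k T)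

/-- `T + 1` is to be the level of a generation of the Moran set: `height` jumps between `T` and
`T + 1` in some block, or `T` is the end of a block. The latter makes the set of such `T`
infinite. -/
def IsLevel (T : ℕ) : Prop :=
  (∃ k, T = B.b k) ∨ ∃ k, B.a k ≤ T ∧ T < B.b k ∧ B.height k T ≠ B.height k (T + 1)

open Classical in
/-- The number of generations `n ≥ 1` of the Moran set whose level is at most `T`. -/
noncomputable def c (T : ℕ) : ℕ := Nat.count B.IsLevel T

/-- The level of the `n`-th generation of the Moran set: its pieces have side `2 ^ (-lev n)`. The
shift by one makes `lev` strictly increasing from `lev 0 = 0` even if `B.IsLevel 0` holds. -/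
noncomputable def lev : ℕ → ℕ
  | 0 => 0
  | n + 1 => Nat.nth B.IsLevel n + 1

lemma e_le_a (k : ℕ) : B.e k ≤ B.a k :=
  (Nat.le_mul_of_pos_left _ (Nat.succ_pos k)).trans (B.sparse k)

lemma e_strictMono : StrictMono B.e := strictMono_nat_of_lt_succ fun k => by
  have := B.e_le_a k
  have := B.a_le_b k
  have := B.e_succ k
  omega

lemma block_unique {k l T : ℕ} (h1 : B.a k ≤ T) (h2 : T ≤ B.b k) (h3 : B.a l ≤ T)
    (h4 : T ≤ B.b l) : k = l := by
  have := B.e_le_a k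
  have := B.e_le_a l
  have := B.e_succ k
  have := B.e_succ l
  rcases lt_trichotomy k l with h | h | h
  · have := B.e_strictMono.monotone (Nat.succ_le_of_lt h)
    simp only [Nat.succ_eq_add_one] at this
    omega
  · exact h
  · have := B.e_strictMono.monotone (Nat.succ_le_of_lt h)
    simp only [Nat.succ_eq_add_one] at this
    omega

lemma finite_cells {k T : ℕ} (h : B.a k ≤ T) :
    (cell T '' (F ∩ cell (B.a k) ⁻¹' {B.q k})).Finite := finite_image_cell h F _

lemma cnt_ne_zero {k T : ℕ} (h : B.a k ≤ T) : B.cnt k T ≠ 0 :=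
  ((Set.ncard_pos (B.finite_cells h)).2 ((B.nonempty k).image _)).ne'

lemma cnt_start (k : ℕ) : B.cnt k (B.a k) ≤ 1 := by
  rw [cnt]
  refine (Set.ncard_le_ncard (t := {B.q k}) ?_ (Set.finite_singleton _)).trans
    (Set.ncard_singleton _).le
  rintro _ ⟨z, hz, rfl⟩
  exact hz.2

lemma cnt_le_mul {k s t : ℕ} (h1 : B.a k ≤ s) (h2 : s ≤ t) {K : ℝ} (hK : LocalCountLE F s t K) :
    (B.cnt k t : ℝ) ≤ B.cnt k s * K :=
  hK.ncard_le Set.inter_subset_left h2 (B.finite_cells h1)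

lemma height_start (k : ℕ) : B.height k (B.a k) = 0 := by
  have h1 := B.cnt_start k
  have h2 := B.cnt_ne_zero (le_refl (B.a k))
  rw [height, show B.cnt k (B.a k) = 1 by omega, Nat.log_one_right]

/-- Passing to the next level multiplies the count by at most `2 ^ d`, so heights jump by at most
one. -/
lemma height_succ (hd : 0 < d) {k T : ℕ} (h : B.a k ≤ T) :
    B.height k (T + 1) = B.height k T ∨ B.height k (T + 1) = B.height k T + 1 := by
  have h1 : B.cnt k T ≤ B.cnt k (T + 1) :=
    ncard_image_cell_mono (Nat.le_succ T) (B.finite_cells (h.trans (Nat.le_succ T)))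
  have h2 := B.cnt_le_mul h (Nat.le_succ T) (localCountLE_pow F (Nat.le_succ T))
  have h3 : B.cnt k (T + 1) ≤ B.cnt k T * 2 ^ d := by
    simp only [Nat.succ_eq_add_one, Nat.add_sub_cancel_left, mul_one] at h2
    exact_mod_cast h2
  have h4 : 1 < 2 ^ d := Nat.one_lt_two_pow hd.ne'
  have h5 : B.height k T ≤ B.height k (T + 1) := Nat.log_mono_right h1
  have h6 : B.height k (T + 1) ≤ B.height k T + 1 := by
    refine (Nat.log_mono_right h3).trans ?_
    rw [Nat.log_mul_base h4 (B.cnt_ne_zero h)]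
    rfl
  omega

lemma pow_height_le {k T : ℕ} (h : B.a k ≤ T) :
    (2 : ℝ) ^ (d * B.height k T) ≤ B.cnt k T := by
  have := Nat.pow_log_le_self (2 ^ d) (B.cnt_ne_zero h)
  rw [← pow_mul] at this
  exact_mod_cast this

lemma cnt_le_pow (hd : 0 < d) (k T : ℕ) :
    (B.cnt k T : ℝ) ≤ 2 ^ d * 2 ^ (d * B.height k T) := by
  have := (Nat.lt_pow_succ_log_self (Nat.one_lt_two_pow hd.ne') (B.cnt k T)).le
  rw [pow_succ', ← pow_mul] at this
  exact_mod_cast this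

lemma c_succ_le (T : ℕ) : B.c (T + 1) ≤ B.c T + 1 := by
  classical
  rw [c, Nat.count_succ, c]
  split_ifs <;> omega

lemma c_mono : Monotone B.c := by
  classical
  exact Nat.count_monotone _

lemma c_le_add {s t : ℕ} (h : s ≤ t) : B.c t ≤ B.c s + (t - s) := by
  induction t, h using Nat.le_induction with
  | base => simp
  | succ t hst ih => have := B.c_succ_le t; omega

/-- The function `c` is constant between consecutive blocks. -/
lemma c_gap {k s t : ℕ} (h1 : B.e k ≤ s) (h2 : s ≤ t) (h3 : t ≤ B.a k) : B.c t = B.c s := by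
  classical
  induction t, h2 using Nat.le_induction with
  | base => rfl
  | succ t hst ih =>
    rw [← ih (by omega), c, Nat.count_succ, if_neg]
    · rfl
    have key : ∀ l, B.a l ≤ t → t ≤ B.b l → False := by
      intro l h4 h5
      have := B.e_succ l
      have := B.e_le_a l
      rcases lt_or_ge l k with h | h
      · have := B.e_strictMono.monotone (Nat.succ_le_of_lt h)
        simp only [Nat.succ_eq_add_one] at this
        omega
      · have := B.a_le_b k
        have := B.e_succ k
        rcases h.eq_or_lt with rfl | h
        · omega
        · have := B.e_strictMono.monotone (Nat.succ_le_of_lt h)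
          simp only [Nat.succ_eq_add_one] at this
          omega
    rintro (⟨l, rfl⟩ | ⟨l, h4, h5, -⟩)
    · exact key l (B.a_le_b l) le_rfl
    · exact key l h4 h5.le

/-- Inside a block, the increments of `c` are those of the height. -/
lemma c_block (hd : 0 < d) {k s t : ℕ} (h1 : B.a k ≤ s) (h2 : s ≤ t) (h3 : t ≤ B.b k) :
    B.c t + B.height k s = B.c s + B.height k t := by
  classical
  induction t, h2 using Nat.le_induction with
  | base => rfl
  | succ t hst ih =>
    have ih := ih (by omega)
    have hc : B.c (t + 1) = B.c t + if B.IsLevel t then 1 else 0 := Nat.count_succ _ _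
    have hl : B.IsLevel t ↔ B.height k t ≠ B.height k (t + 1) := by
      constructor
      · rintro (⟨l, rfl⟩ | ⟨l, h4, h5, h6⟩)
        · have := B.block_unique (h1.trans hst) (by omega) (B.a_le_b l) le_rfl
          subst this
          omega
        · have := B.block_unique (h1.trans hst) (by omega) h4 h5.le
          subst this
          exact h6
      · exact fun h => Or.inr ⟨k, h1.trans hst, by omega, h⟩
    have := B.height_succ hd (h1.trans hst)
    split_ifs at hc with hif
    · have := hl.1 hif
      omega
    · have := mt hl.2 hif
      omega

/-- Over a window of levels contained in `[a m, a (m + 1)]`, the increment of `c` is controlled by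
the local counts of `F` over that window. -/
lemma window_le_of_single (hd : 0 < d) (hF : F.Nonempty) {m s t : ℕ} (h1 : B.a m ≤ s)
    (h2 : s ≤ t) (h3 : t ≤ B.a (m + 1)) {K : ℝ} (hK : LocalCountLE F s t K) :
    (2 : ℝ) ^ (d * B.c t) ≤ 2 ^ (2 * d) * K * 2 ^ (d * B.c s) := by
  have hK1 := hK.one_le hF
  have he := B.e_succ m
  rcases le_or_gt s (B.b m) with h | h
  · set t' := min t (B.b m)
    have h4 : s ≤ t' := le_min h2 h
    -- the forced generation just after the end of the block costs one
    have h5 : B.c t ≤ B.c t' + 1 := by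
      rcases le_total t (B.b m) with h' | h'
      · simp [t', h']
      · rw [show t' = B.b m from min_eq_right h']
        rcases h'.eq_or_lt with h'' | h''
        · rw [h'']; omega
        · rw [B.c_gap (k := m + 1) he.le (by omega) h3]
          exact B.c_succ_le _
    have h6 := B.c_block hd h1 h4 (min_le_right _ _)
    have h7 := B.cnt_le_mul h1 h4 (hK.mono le_rfl h4 (min_le_left _ _))
    have h8 := B.pow_height_le (h1.trans h4)
    have h9 := B.cnt_le_pow hd m s
    have h10 : (2 : ℝ) ^ (d * B.height m t') ≤ 2 ^ d * 2 ^ (d * B.height m s) * K :=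
      h8.trans (h7.trans (by gcongr))
    have h11 : (0 : ℝ) < 2 ^ (d * B.height m s) := by positivity
    refine le_of_mul_le_mul_right ?_ h11
    calc (2 : ℝ) ^ (d * B.c t) * 2 ^ (d * B.height m s)
        ≤ 2 ^ (d * (B.c t' + 1)) * 2 ^ (d * B.height m s) := by
          gcongr; norm_num
      _ = 2 ^ d * 2 ^ (d * B.c s) * 2 ^ (d * B.height m t') := by
          rw [← pow_add, ← pow_add, ← pow_add]
          congr 1
          rw [← mul_add, add_right_comm, h6]
          ring
      _ ≤ 2 ^ d * 2 ^ (d * B.c s) * (2 ^ d * 2 ^ (d * B.height m s) * K) := by gcongr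
      _ = _ := by ring
  · rw [B.c_gap (k := m + 1) (by omega) h2 h3]
    have : (1 : ℝ) ≤ 2 ^ (2 * d) := one_le_pow₀ (by norm_num)
    exact le_mul_of_one_le_left (by positivity) (by nlinarith)

/-- Over an arbitrary window `[s, t]`, the increment of `c` is controlled by the local counts of `F`
up to the contribution of the blocks that precede the last block starting before `t`. The exponent
`e m - s` is truncated: it vanishes when these blocks end before `s`. -/
lemma window_le (hd : 0 < d) (hF : F.Nonempty) {s t : ℕ} (hst : s ≤ t) {K : ℝ}
    (hK : LocalCountLE F s t K) :
    ∃ m, (m = 0 ∨ B.a m < t) ∧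
      (2 : ℝ) ^ (d * B.c t) ≤ 2 ^ (2 * d) * K * 2 ^ (d * (B.e m - s)) * 2 ^ (d * B.c s) := by
  classical
  have hK1 := hK.one_le hF
  have hp : (1 : ℝ) ≤ 2 ^ (2 * d) := one_le_pow₀ (by norm_num)
  have hex : ∃ m, t ≤ B.a m := ⟨t, (B.e_strictMono.le_apply).trans (B.e_le_a t)⟩
  rcases h : Nat.find hex with _ | m
  · have h0 : t ≤ B.a 0 := by have := Nat.find_spec hex; rwa [h] at this
    refine ⟨0, Or.inl rfl, ?_⟩
    rw [B.c_gap (by rw [B.e_zero]; omega) hst h0, B.e_zero, Nat.zero_sub, mul_zero, pow_zero,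
      mul_one]
    exact le_mul_of_one_le_left (by positivity) (by nlinarith)
  · have h0 : t ≤ B.a (m + 1) := by have := Nat.find_spec hex; rwa [h] at this
    have h1 : B.a m < t := by
      have := Nat.find_min hex (m := m) (by omega)
      omega
    refine ⟨m, Or.inr h1, ?_⟩
    rcases le_total (B.a m) s with h2 | h2
    · refine (B.window_le_of_single hd hF h2 hst h0 hK).trans ?_
      have : (1 : ℝ) ≤ 2 ^ (d * (B.e m - s)) := one_le_pow₀ (by norm_num)
      have h3 : 2 ^ (2 * d) * K ≤ 2 ^ (2 * d) * K * 2 ^ (d * (B.e m - s)) :=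
        le_mul_of_one_le_right (by positivity) this
      gcongr
    · have h3 := B.window_le_of_single hd hF le_rfl h1.le h0 (hK.mono h2 h1.le le_rfl)
      have h4 : B.c (B.a m) ≤ (B.e m - s) + B.c s := by
        rcases le_total (B.e m) s with h5 | h5
        · rw [B.c_gap h5 h2 le_rfl]; omega
        · rw [B.c_gap le_rfl (B.e_le_a m) le_rfl]
          have := B.c_le_add h5
          omega
      refine h3.trans ?_
      rw [mul_assoc _ (2 ^ (d * (B.e m - s))), ← pow_add, ← mul_add]
      gcongr
      norm_num

/-- Over a full block, the increment of `c` accounts for all cells of `F` in the cube of the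
block. -/
lemma cnt_end_le (hd : 0 < d) (k : ℕ) :
    (B.cnt k (B.b k) : ℝ) * 2 ^ (d * B.c (B.a k)) ≤ 2 ^ d * 2 ^ (d * B.c (B.b k)) := by
  have h1 := B.c_block hd le_rfl (B.a_le_b k) le_rfl
  rw [B.height_start, add_zero] at h1
  rw [h1, mul_add, pow_add]
  have := B.cnt_le_pow hd k (B.b k)
  calc _ ≤ 2 ^ d * 2 ^ (d * B.height k (B.b k)) * (2 : ℝ) ^ (d * B.c (B.a k)) := by gcongr
    _ = _ := by ring

lemma infinite_isLevel : {T | B.IsLevel T}.Infinite := by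
  refine Set.infinite_of_injective_forall_mem (f := B.b) ?_ fun k => Or.inl ⟨k, rfl⟩
  intro k l h
  have h1 := B.e_succ k
  rw [h, ← B.e_succ l] at h1
  simpa using B.e_strictMono.injective h1

/-- `lev` and `c` form a Galois connection. -/
lemma lev_le_iff {n T : ℕ} : B.lev n ≤ T ↔ n ≤ B.c T := by
  classical
  cases n with
  | zero => simp [lev]
  | succ n => exact (Nat.lt_nth_iff_count_lt B.infinite_isLevel).symm

lemma lev_strictMono : StrictMono B.lev := strictMono_nat_of_lt_succ fun n => by
  cases n with
  | zero => simp [lev]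
  | succ n =>
    have := Nat.nth_strictMono B.infinite_isLevel (Nat.lt_succ_self n)
    simp only [lev]
    exact Nat.succ_lt_succ this

end Blocks

/-! ### Covering numbers of the Moran set of a sequence of blocks -/

/-- The integer part of `log₂ (1 / x)`: for `0 < x < 1` it is the largest `n` with `x ≤ 2⁻ⁿ`. -/
noncomputable def lo (x : ℝ) : ℕ := ⌊-Real.logb 2 x⌋₊

/-- The upper integer part of `log₂ (1 / x)`: for `0 < x < 1` it is the smallest `n` with
`2⁻ⁿ ≤ x`. -/
noncomputable def hi (x : ℝ) : ℕ := ⌈-Real.logb 2 x⌉₊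

lemma neg_logb_nonneg {x : ℝ} (h0 : 0 < x) (h1 : x < 1) : 0 ≤ -Real.logb 2 x := by
  rw [neg_nonneg]
  exact Real.logb_nonpos (by norm_num) h0.le h1.le

lemma half_pow (n : ℕ) : ((1 : ℝ) / 2) ^ n = 2 ^ (-(n : ℝ)) := by
  rw [Real.rpow_neg (by norm_num), Real.rpow_natCast, one_div, inv_pow]

lemma two_rpow_logb {x : ℝ} (h0 : 0 < x) : (2 : ℝ) ^ Real.logb 2 x = x :=
  Real.rpow_logb (by norm_num) (by norm_num) h0

lemma le_half_pow_lo {x : ℝ} (h0 : 0 < x) (h1 : x < 1) : x ≤ (1 / 2) ^ lo x := by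
  rw [half_pow]
  nth_rw 1 [← two_rpow_logb h0]
  refine Real.rpow_le_rpow_of_exponent_le (by norm_num) ?_
  have := Nat.floor_le (neg_logb_nonneg h0 h1)
  rw [lo]
  linarith

lemma half_pow_hi_le {x : ℝ} (h0 : 0 < x) : (1 / 2) ^ hi x ≤ x := by
  rw [half_pow]
  nth_rw 2 [← two_rpow_logb h0]
  refine Real.rpow_le_rpow_of_exponent_le (by norm_num) ?_
  have := Nat.le_ceil (-Real.logb 2 x)
  rw [hi]
  linarith

lemma hi_le_lo_add_one (x : ℝ) : hi x ≤ lo x + 1 := Nat.ceil_le_floor_add_one _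

lemma lo_le_hi (x : ℝ) : lo x ≤ hi x := Nat.floor_le_ceil _

lemma lo_anti {r R : ℝ} (hr : 0 < r) (h : r ≤ R) : lo R ≤ lo r :=
  Nat.floor_le_floor (neg_le_neg (Real.logb_le_logb_of_le (by norm_num) hr h))

/-- Subsets of `Fin d → ℝ` satisfy the bound defining the Assouad dimension with exponent `d`. In
particular the sets of exponents in the definitions of the dimensions are non-empty, so that their
infima are meaningful. -/
lemma coverNumber_le_general {d : ℕ} (F : Set (Fin d → ℝ)) {r R : ℝ} (hr : 0 < r) (hrR : r ≤ R)
    (hR : R < 1) (x : Fin d → ℝ) :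
    coverNumber (F ∩ ball x R) r ≤ ENNReal.ofReal (5 ^ d * 2 ^ (2 * d) * (R / r) ^ (d : ℝ)) := by
  have hR0 := hr.trans_le hrR
  have hab : lo R ≤ hi r := (lo_anti hr hrR).trans (lo_le_hi r)
  refine ((localCountLE_pow F hab).coverNumber_le hab (le_half_pow_lo hR0 hR)
    (half_pow_hi_le hr) x).trans (ENNReal.ofReal_le_ofReal ?_)
  rw [mul_assoc]
  gcongr
  have h1 : R / r = 2 ^ (Real.logb 2 R - Real.logb 2 r) := by
    rw [Real.rpow_sub (by norm_num), two_rpow_logb hR0, two_rpow_logb hr]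
  rw [h1, ← Real.rpow_mul (by norm_num), ← Real.rpow_natCast, ← Real.rpow_natCast,
    ← Real.rpow_add (by norm_num)]
  refine Real.rpow_le_rpow_of_exponent_le (by norm_num) ?_
  have h2 : (hi r : ℝ) < -Real.logb 2 r + 1 :=
    Nat.ceil_lt_add_one (neg_logb_nonneg hr (hrR.trans_lt hR))
  have h3 : -Real.logb 2 R < lo R + 1 := Nat.lt_floor_add_one _
  push_cast [Nat.cast_sub hab]
  have h4 : (0 : ℝ) ≤ d := Nat.cast_nonneg _
  nlinarith

/-- In particular `log₂ (1 / R ^ (1 + φ R)) ≤ (1 + φ (1 / 2)) * (log₂ (1 / R) + 1)`. For `R ≤ 1 / 2`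
this is the monotonicity of `φ`, and for `R ≥ 1 / 2` that of `φ R * log (1 / R)`. -/
lemma IsDimFunction.mul_logb_le {φ : ℝ → ℝ} (hφ : IsDimFunction φ) {R : ℝ}
    (hR : R ∈ Set.Ioo (0 : ℝ) 1) :
    φ R * -Real.logb 2 R ≤ φ (1 / 2) * (-Real.logb 2 R + 1) := by
  have hh : (1 / 2 : ℝ) ∈ Set.Ioo (0 : ℝ) 1 := by norm_num
  have h0 := neg_logb_nonneg hR.1 hR.2
  have hpos := hφ.1 _ hh
  have hlog : 0 < Real.log 2 := Real.log_pos (by norm_num)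
  rcases le_total R (1 / 2) with h | h
  · have := (hφ.2.1 R hR _ hh h).2
    nlinarith
  · have h1 := (hφ.2.1 _ hh R hR h).1
    rw [one_div, one_div_one_div, Real.log_inv] at h1
    have h2 : φ R * -Real.logb 2 R ≤ φ (1 / 2) := by
      rw [Real.logb, ← neg_div, ← mul_div_assoc, div_le_iff₀ hlog]
      exact h1
    nlinarith

lemma IsDimFunction.rpow_le {φ : ℝ → ℝ} (hφ : IsDimFunction φ) {R : ℝ}
    (hR : R ∈ Set.Ioo (0 : ℝ) 1) : R ^ (1 + φ R) ≤ R := by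
  have h := Real.rpow_le_rpow_of_exponent_ge hR.1 hR.2.le
    (show (1 : ℝ) ≤ 1 + φ R by have := hφ.1 R hR; linarith)
  rwa [Real.rpow_one] at h

lemma div_rpow_one_add {R y s : ℝ} (hR : 0 < R) :
    (R / R ^ (1 + y)) ^ s = R ^ (-(y * s)) := by
  rw [Real.rpow_add hR, Real.rpow_one, div_mul_cancel_left₀ hR.ne', ← Real.rpow_neg hR.le,
    ← Real.rpow_mul hR.le, neg_mul]

namespace Blocks

variable {d : ℕ} {F : Set (Fin d → ℝ)} (B : Blocks F)

/-- The homogeneous Moran set whose generations have the levels given by the blocks. -/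
noncomputable def moran : Set (Fin d → ℝ) := moranSet d (dyadicRatio B.lev)

lemma isHomogeneousMoran : IsHomogeneousMoran d B.moran :=
  ⟨dyadicRatio B.lev, dyadicRatio_bounds B.lev_strictMono, rfl⟩

lemma moran_nonempty : B.moran.Nonempty :=
  moranSet_nonempty (dyadicRatio_bounds B.lev_strictMono)

/-- Covering numbers of the Moran set are bounded by those of `F` at the same scales, up to a
constant and the factor from `window_le`. -/
lemma coverNumber_moran_le (hd : 0 < d) (hF : F.Nonempty) {r R V : ℝ} (hr : 0 < r)
    (hrR : r ≤ R) (hR : R < 1) (hV : 0 ≤ V)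
    (h : ∀ x ∈ F, coverNumber (F ∩ ball x R) r ≤ ENNReal.ofReal V) :
    ∃ m, (m = 0 ∨ B.a m < lo r) ∧ ∀ x, coverNumber (B.moran ∩ ball x R) r ≤
      ENNReal.ofReal (5 ^ d * 2 ^ (5 * d) * 5 ^ d * V * 2 ^ (d * (B.e m - hi R))) := by
  have hR0 := hr.trans_le hrR
  have hr1 := hrR.trans_lt hR
  have hK := localCountLE_of_coverNumber hV (half_pow_hi_le hR0) (le_half_pow_lo hr hr1) h
  have hK1 := hK.one_le hF
  have c1 := (B.c_mono (hi_le_lo_add_one r)).trans (B.c_succ_le _)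
  have c2 := (B.c_mono (hi_le_lo_add_one R)).trans (B.c_succ_le _)
  have c3 := B.c_mono (lo_anti hr hrR)
  have c4 := B.c_mono (lo_le_hi r)
  have key : ∀ x, coverNumber (B.moran ∩ ball x R) r ≤
      ENNReal.ofReal (5 ^ d * 2 ^ (d * (B.c (hi r) + 1 - B.c (lo R)))) := by
    intro x
    refine coverNumber_moranSet_le B.lev_strictMono rfl (by omega) ?_ ?_ x
    · refine (le_half_pow_lo hR0 hR).trans
        (pow_le_pow_of_le_one (by norm_num) (by norm_num) (B.lev_le_iff.2 le_rfl))
    · refine lt_of_lt_of_le ?_ (half_pow_hi_le hr)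
      refine pow_lt_pow_right_of_lt_one₀ (by norm_num) (by norm_num) ?_
      by_contra! hcon
      have := B.lev_le_iff.1 hcon
      omega
  rcases le_or_gt (hi R) (lo r) with hw | hw
  · obtain ⟨m, hm, hle⟩ := B.window_le hd hF hw hK
    refine ⟨m, hm, fun x => (key x).trans (ENNReal.ofReal_le_ofReal ?_)⟩
    have c5 := B.c_mono hw
    have h1 : (2 : ℝ) ^ (d * (B.c (hi r) + 1 - B.c (lo R))) * 2 ^ (d * B.c (hi R)) ≤
        2 ^ (3 * d) * 2 ^ (d * B.c (lo r)) := by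
      rw [← pow_add, ← pow_add]
      refine pow_le_pow_right₀ (by norm_num) ?_
      rw [← mul_add, mul_comm 3 d, ← mul_add]
      exact Nat.mul_le_mul_left d (by omega)
    have h2 : (2 : ℝ) ^ (d * (B.c (hi r) + 1 - B.c (lo R))) * 2 ^ (d * B.c (hi R)) ≤
        2 ^ (5 * d) * (5 ^ d * V) * 2 ^ (d * (B.e m - hi R)) * 2 ^ (d * B.c (hi R)) := by
      refine h1.trans ((mul_le_mul_of_nonneg_left hle (by positivity)).trans (le_of_eq ?_))
      ring
    have h3 := le_of_mul_le_mul_right h2 (by positivity)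
    calc _ ≤ 5 ^ d * (2 ^ (5 * d) * (5 ^ d * V) * (2 : ℝ) ^ (d * (B.e m - hi R))) := by gcongr
      _ = _ := by ring
  · refine ⟨0, Or.inl rfl, fun x => (key x).trans (ENNReal.ofReal_le_ofReal ?_)⟩
    have h0 : lo r = lo R := by
      have := lo_anti hr hrR
      have := hi_le_lo_add_one R
      omega
    rw [B.e_zero, Nat.zero_sub, mul_zero, pow_zero, mul_one, mul_assoc (_ * _)]
    have h1 : (2 : ℝ) ^ (d * (B.c (hi r) + 1 - B.c (lo R))) ≤ 2 ^ (5 * d) := by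
      refine pow_le_pow_right₀ (by norm_num) ?_
      rw [mul_comm 5 d]
      exact Nat.mul_le_mul_left d (by rw [h0] at c1; omega)
    calc _ ≤ (5 : ℝ) ^ d * 2 ^ (5 * d) * 1 := by rw [mul_one]; gcongr
      _ ≤ _ := by gcongr

/-- A bound on a covering number of the Moran set, at any one of its points, bounds the increment of
`c` between the two scales. -/
lemma le_of_coverNumber_moran_le {r R V : ℝ} (hr : 0 < r) (hrR : r ≤ R) (hR : R < 1)
    (hV : 0 ≤ V) {x : Fin d → ℝ} (hx : x ∈ B.moran)
    (h : coverNumber (B.moran ∩ ball x R) r ≤ ENNReal.ofReal V) :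
    (2 : ℝ) ^ (d * B.c (hi r)) ≤ 5 ^ d * 2 ^ (3 * d) * V * 2 ^ (d * B.c (lo R)) := by
  have hR0 := hr.trans_le hrR
  have hr1 := hrR.trans_lt hR
  have c1 := (B.c_mono (hi_le_lo_add_one r)).trans (B.c_succ_le _)
  have c2 := (B.c_mono (hi_le_lo_add_one R)).trans (B.c_succ_le _)
  have key := le_of_coverNumber_moranSet_le (k := B.c (hi R) + 1) (n := B.c (lo r))
    B.lev_strictMono rfl ?_ ?_ hx hV h
  · calc (2 : ℝ) ^ (d * B.c (hi r)) ≤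
        2 ^ (d * (B.c (lo r) - (B.c (hi R) + 1)) + 3 * d + d * B.c (lo R)) := by
          refine pow_le_pow_right₀ (by norm_num) ?_
          rw [mul_comm 3 d, ← mul_add, ← mul_add]
          exact Nat.mul_le_mul_left d (by omega)
      _ = 2 ^ (d * (B.c (lo r) - (B.c (hi R) + 1))) * 2 ^ (3 * d) * 2 ^ (d * B.c (lo R)) := by
          rw [pow_add, pow_add]
      _ ≤ 5 ^ d * V * 2 ^ (3 * d) * 2 ^ (d * B.c (lo R)) := by gcongr
      _ = _ := by ring
  · refine lt_of_lt_of_le ?_ (half_pow_hi_le hR0)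
    refine pow_lt_pow_right_of_lt_one₀ (by norm_num) (by norm_num) ?_
    by_contra! hcon
    have := B.lev_le_iff.1 hcon
    omega
  · exact (le_half_pow_lo hr hr1).trans
      (pow_le_pow_of_le_one (by norm_num) (by norm_num) (B.lev_le_iff.2 le_rfl))

end Blocks

/-! ### Comparison of the dimensions -/

lemma coverNumber_le_general_phi {d : ℕ} (F : Set (Fin d → ℝ)) {φ : ℝ → ℝ}
    (hφ : IsDimFunction φ) {R : ℝ} (hR : R ∈ Set.Ioo (0 : ℝ) 1) (x : Fin d → ℝ) :
    coverNumber (F ∩ ball x R) (R ^ (1 + φ R)) ≤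
      ENNReal.ofReal (5 ^ d * 2 ^ (2 * d) * R ^ (-(φ R * d))) := by
  have := coverNumber_le_general F (Real.rpow_pos_of_pos hR.1 _) (hφ.rpow_le hR) hR.2 x
  rwa [div_rpow_one_add hR.1] at this

lemma phiAssouad_le {X : Type*} [PseudoMetricSpace X] {F : Set X} {φ : ℝ → ℝ} {s C : ℝ}
    (hs : 0 ≤ s) (hC : 0 < C) (h : ∀ R ∈ Set.Ioo (0 : ℝ) 1, ∀ x ∈ F,
      coverNumber (F ∩ ball x R) (R ^ (1 + φ R)) ≤ ENNReal.ofReal (C * R ^ (-(φ R * s)))) :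
    phiAssouad F φ ≤ s :=
  csInf_le ⟨0, fun _ h => h.1⟩ ⟨hs, C, hC, h⟩

lemma le_phiAssouad {d : ℕ} {F : Set (Fin d → ℝ)} {φ : ℝ → ℝ} (hφ : IsDimFunction φ) {t : ℝ}
    (h : ∀ s C : ℝ, 0 ≤ s → 0 < C → (∀ R ∈ Set.Ioo (0 : ℝ) 1, ∀ x ∈ F,
      coverNumber (F ∩ ball x R) (R ^ (1 + φ R)) ≤ ENNReal.ofReal (C * R ^ (-(φ R * s)))) →
      t ≤ s) :
    t ≤ phiAssouad F φ := by
  refine le_csInf ⟨d, Nat.cast_nonneg _, 5 ^ d * 2 ^ (2 * d), by positivity,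
    fun R hR x _ => coverNumber_le_general_phi F hφ hR x⟩ ?_
  rintro s ⟨hs, C, hC, hle⟩
  exact h s C hs hC hle

/-- If `s` is smaller than the `φ`-Assouad dimension of `F`, then at arbitrarily deep levels there
are cubes violating any given bound `C * R ^ (-φ R * s)`. For `s < 0` only some cube meeting `F` is
asked for. -/
lemma exists_rich_cell {d : ℕ} {F : Set (Fin d → ℝ)} (hF : F.Nonempty) {φ : ℝ → ℝ}
    (hφ : IsDimFunction φ) {s : ℝ} (hs : s < phiAssouad F φ) (C : ℝ) (T : ℕ) :
    ∃ a b : ℕ, ∃ q : Fin d → ℤ, T ≤ a ∧ a ≤ b ∧ (F ∩ cell a ⁻¹' {q}).Nonempty ∧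
      ∃ R ∈ Set.Ioo (0 : ℝ) 1, a = lo R ∧ b = hi (R ^ (1 + φ R)) ∧
        (0 ≤ s → C * R ^ (-(φ R * s)) ≤ (cell b '' (F ∩ cell a ⁻¹' {q})).ncard) := by
  have hle : ∀ R ∈ Set.Ioo (0 : ℝ) 1, lo R ≤ hi (R ^ (1 + φ R)) := fun R hR =>
    (lo_anti (Real.rpow_pos_of_pos hR.1 _) (hφ.rpow_le hR)).trans (lo_le_hi _)
  rcases lt_or_ge s 0 with hs0 | hs0
  · obtain ⟨z, hz⟩ := hF
    have hR : ((1 : ℝ) / 2) ^ (T + 1) ∈ Set.Ioo (0 : ℝ) 1 :=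
      ⟨by positivity, pow_lt_one₀ (by norm_num) (by norm_num) (by omega)⟩
    refine ⟨_, _, cell _ z, ?_, hle _ hR, ⟨z, hz, rfl⟩, _, hR, rfl, rfl,
      fun h => absurd h hs0.not_ge⟩
    rw [lo, half_pow, Real.logb_rpow (by norm_num) (by norm_num), neg_neg, Nat.floor_natCast]
    omega
  -- `P` bounds `R ^ (-φ R * d)` for the scales `R` with `lo R < T`, so a failure of the bound with
  -- constant `C'` can only occur at levels at least `T`
  set P : ℝ := (2 ^ (φ (1 / 2) * (T + 2))) ^ (d : ℝ)
  set C' : ℝ := 5 ^ d * (|C| + 2 ^ (2 * d) * P + 1)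
  have hP : 0 < P := by positivity
  have hC' : 0 < C' := by positivity
  have hcon : ¬ ∀ R ∈ Set.Ioo (0 : ℝ) 1, ∀ x ∈ F,
      coverNumber (F ∩ ball x R) (R ^ (1 + φ R)) ≤ ENNReal.ofReal (C' * R ^ (-(φ R * s))) :=
    fun h => hs.not_ge (phiAssouad_le hs0 hC' h)
  push Not at hcon
  obtain ⟨R, hR, x, hx, hlt⟩ := hcon
  have hφR := hφ.1 R hR
  have hpow : 1 ≤ R ^ (-(φ R * s)) :=
    Real.one_le_rpow_of_pos_of_le_one_of_nonpos hR.1 hR.2.le (by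
      have := mul_nonneg hφR.le hs0
      linarith)
  have hK : ¬ LocalCountLE F (lo R) (hi (R ^ (1 + φ R)))
      ((|C| + 2 ^ (2 * d) * P + 1) * R ^ (-(φ R * s))) := by
    intro hK
    have := hK.coverNumber_le (hle R hR) (le_half_pow_lo hR.1 hR.2)
      (half_pow_hi_le (Real.rpow_pos_of_pos hR.1 _)) x
    rw [← mul_assoc] at this
    exact hlt.not_ge this
  rw [LocalCountLE] at hK
  push Not at hK
  obtain ⟨q, hq⟩ := hK
  refine ⟨_, _, q, ?_, hle R hR, ?_, R, hR, rfl, rfl, fun _ => le_trans ?_ hq.le⟩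
  · -- at scales bounded away from zero the covering number is at most `C'`
    by_contra! hT
    refine hlt.not_ge ((coverNumber_le_general_phi F hφ hR x).trans
      (ENNReal.ofReal_le_ofReal ?_))
    have h1 : -Real.logb 2 R < lo R + 1 := Nat.lt_floor_add_one _
    have h2 : (lo R : ℝ) + 1 ≤ T := by exact_mod_cast hT
    have h3 := hφ.mul_logb_le hR
    have h4 : R ^ (-(φ R * d)) ≤ P := by
      rw [← neg_mul, Real.rpow_mul hR.1.le]
      refine Real.rpow_le_rpow (by have := hR.1; positivity) ?_ (Nat.cast_nonneg _)
      nth_rw 1 [← two_rpow_logb hR.1]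
      rw [← Real.rpow_mul (by norm_num)]
      refine Real.rpow_le_rpow_of_exponent_le (by norm_num) ?_
      have h5 := hφ.1 (1 / 2) (by norm_num)
      nlinarith
    calc 5 ^ d * 2 ^ (2 * d) * R ^ (-(φ R * d)) ≤ 5 ^ d * 2 ^ (2 * d) * P := by gcongr
      _ ≤ C' := by
          rw [mul_assoc]
          refine mul_le_mul_of_nonneg_left ?_ (by positivity)
          linarith [abs_nonneg C]
      _ ≤ _ := le_mul_of_one_le_right hC'.le hpow
  · by_contra! hemp
    rw [hemp, Set.image_empty, Set.ncard_empty, Nat.cast_zero] at hq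
    exact hq.not_ge (by positivity)
  · gcongr
    have := le_abs_self C
    have : 0 < 2 ^ (2 * d) * P := by positivity
    linarith

/-- The exponent aimed at by block `k`. With `k` encoding a pair `(i, n)`, it is
`dim_A^{φ i} F - 1 / (n + 1)`. -/
noncomputable def target {d : ℕ} (F : Set (Fin d → ℝ)) (φ : ℕ → ℝ → ℝ) (k : ℕ) : ℝ :=
  phiAssouad F (φ k.unpair.1) - 1 / (k.unpair.2 + 1)

/-- A sequence of blocks whose `k`-th cube is rich in cells of `F` for the exponent `target F φ k`,
with the constant `k`. -/
lemma exists_blocks {d : ℕ} {F : Set (Fin d → ℝ)} (hF : F.Nonempty) {φ : ℕ → ℝ → ℝ}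
    (hφ : ∀ i, IsDimFunction (φ i)) :
    ∃ B : Blocks F, ∀ k, ∃ R ∈ Set.Ioo (0 : ℝ) 1, B.a k = lo R ∧
      B.b k = hi (R ^ (1 + φ k.unpair.1 R)) ∧
      (0 ≤ target F φ k →
        k * R ^ (-(φ k.unpair.1 R * target F φ k)) ≤ B.cnt k (B.b k)) := by
  have H := fun k : ℕ => exists_rich_cell hF (hφ k.unpair.1) (s := target F φ k)
    (sub_lt_self _ (by positivity)) k
  choose A A' Q h1 h2 h3 h4 using H
  let e : ℕ → ℕ := fun n => Nat.rec 0 (fun k ek => A' k ((k + 1) * ek) + 1) n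
  exact ⟨⟨fun k => A k ((k + 1) * e k), fun k => A' k ((k + 1) * e k), e,
    fun k => Q k ((k + 1) * e k), rfl, fun k => rfl, fun k => h1 k _, fun k => h2 k _,
    fun k => h3 k _⟩, fun k => h4 k _⟩

namespace Blocks

variable {d : ℕ} {F : Set (Fin d → ℝ)} (B : Blocks F)

/-- The windows of a dimension function satisfy `t ≤ K * (s + 1)` with `K` fixed, so that the factor
from `window_le` is bounded by sparsity of the blocks. -/
lemma phiAssouad_moran_le (hd : 0 < d) (hF : F.Nonempty) {φ : ℝ → ℝ} (hφ : IsDimFunction φ) :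
    phiAssouad B.moran φ ≤ phiAssouad F φ := by
  refine le_phiAssouad hφ fun s C hs hC h => ?_
  -- blocks of index at least `K` are so sparse that `e m > hi R + 1` is impossible
  set K := ⌈1 + φ (1 / 2)⌉₊
  refine phiAssouad_le hs (C := 5 ^ d * 2 ^ (5 * d) * 5 ^ d * C * 2 ^ (d * (B.e K + 1)))
    (by positivity) fun R hR x _ => ?_
  have hr := Real.rpow_pos_of_pos hR.1 (1 + φ R)
  have hRp := Real.rpow_pos_of_pos hR.1 (-(φ R * s))
  obtain ⟨m, hm, hle⟩ := B.coverNumber_moran_le hd hF hr (hφ.rpow_le hR) hR.2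
    (by positivity) (h R hR)
  refine (hle x).trans (ENNReal.ofReal_le_ofReal ?_)
  have hem : B.e m - hi R ≤ B.e K + 1 := by
    rcases hm with rfl | hm
    · rw [B.e_zero]; omega
    rcases le_total m K with hmK | hmK
    · have := B.e_strictMono.monotone hmK
      omega
    · have h0 := neg_logb_nonneg hR.1 hR.2
      have hφh := hφ.1 (1 / 2) (by norm_num)
      have h1 : (B.a m : ℝ) < K * (hi R + 1) := by
        have h2 : (B.a m : ℝ) < lo (R ^ (1 + φ R)) := by exact_mod_cast hm
        have h3 : (lo (R ^ (1 + φ R)) : ℝ) ≤ (1 + φ R) * -Real.logb 2 R := by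
          have h4 := Nat.floor_le (neg_logb_nonneg hr ((hφ.rpow_le hR).trans_lt hR.2))
          rw [lo]
          refine h4.trans (le_of_eq ?_)
          rw [Real.logb_rpow_eq_mul_logb_of_pos hR.1]
          ring
        have h5 := hφ.mul_logb_le hR
        have h6 : -Real.logb 2 R ≤ hi R := Nat.le_ceil _
        have h7 : 1 + φ (1 / 2) ≤ K := Nat.le_ceil _
        nlinarith
      have h8 : B.a m < K * (hi R + 1) := by exact_mod_cast h1
      have h9 := B.sparse m
      by_contra! hcon
      have : K * (hi R + 1) ≤ (m + 1) * B.e m := Nat.mul_le_mul (by omega) (by omega)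
      omega
  calc _ ≤ 5 ^ d * 2 ^ (5 * d) * 5 ^ d * (C * R ^ (-(φ R * s))) *
        2 ^ (d * (B.e K + 1)) := by
          gcongr
          norm_num
    _ = _ := by ring

/-- Sparsity of the blocks bounds the factor from `window_le` by a constant times `(R / r) ^ δ`, for
every `δ > 0`. -/
lemma assouadDim_moran_le (hd : 0 < d) (hF : F.Nonempty) :
    assouadDim B.moran ≤ assouadDim F := by
  refine le_csInf ⟨d, Nat.cast_nonneg _, 5 ^ d * 2 ^ (2 * d), by positivity,
    fun r R hr hrR hR x _ => coverNumber_le_general F hr hrR hR x⟩ ?_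
  rintro s ⟨hs, C, hC, h⟩
  refine le_of_forall_pos_le_add fun ε hε => ?_
  set δ := min ε 1
  have hδ : 0 < δ := lt_min hε one_pos
  refine le_trans ?_ (add_le_add_right (min_le_left ε 1) s)
  -- for `m ≥ K` sparsity gives `d * e m ≤ δ * a m`
  set K := ⌈d / δ⌉₊
  refine csInf_le ⟨0, fun _ h => h.1⟩ ⟨by positivity,
    5 ^ d * 2 ^ (5 * d) * 5 ^ d * C * 2 ^ (d * B.e K), by positivity,
    fun r R hr hrR hR x _ => ?_⟩
  have hR0 := hr.trans_le hrR
  have h1R : 1 ≤ R / r := (one_le_div hr).2 hrR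
  obtain ⟨m, hm, hle⟩ := B.coverNumber_moran_le hd hF hr hrR hR (by positivity)
    (h r R hr hrR hR)
  refine (hle x).trans (ENNReal.ofReal_le_ofReal ?_)
  have hem : (2 : ℝ) ^ (d * (B.e m - hi R)) ≤ 2 ^ (d * B.e K) * (R / r) ^ δ := by
    have hδ1 : 1 ≤ (R / r) ^ δ := Real.one_le_rpow h1R hδ.le
    have h2K : (1 : ℝ) ≤ 2 ^ (d * B.e K) := one_le_pow₀ (by norm_num)
    rcases le_total m K with hmK | hmK
    · have := B.e_strictMono.monotone hmK
      calc (2 : ℝ) ^ (d * (B.e m - hi R)) ≤ 2 ^ (d * B.e K) :=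
            pow_le_pow_right₀ (by norm_num) (Nat.mul_le_mul_left d (by omega))
        _ ≤ _ := le_mul_of_one_le_right (by positivity) hδ1
    · refine le_trans ?_ (le_mul_of_one_le_left (by positivity) h2K)
      rcases le_total (B.e m) (hi R) with h2 | h2
      · rw [Nat.sub_eq_zero_of_le h2, mul_zero, pow_zero]
        exact hδ1
      have hm : B.a m < lo r := by
        rcases hm with rfl | hm
        · have hK : (0 : ℝ) < d / δ := div_pos (by exact_mod_cast hd) hδ
          have := Nat.ceil_pos.2 hK
          omega
        · exact hm
      have h3 : R / r = 2 ^ (Real.logb 2 R - Real.logb 2 r) := by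
        rw [Real.rpow_sub (by norm_num), two_rpow_logb hR0, two_rpow_logb hr]
      rw [h3, ← Real.rpow_mul (by norm_num), ← Real.rpow_natCast]
      refine Real.rpow_le_rpow_of_exponent_le (by norm_num) ?_
      push_cast [Nat.cast_sub h2]
      have h4 : (d : ℝ) ≤ δ * (m + 1) := by
        have h5 : (d : ℝ) / δ ≤ K := Nat.le_ceil _
        have h6 : (K : ℝ) ≤ m := by exact_mod_cast hmK
        rw [div_le_iff₀ hδ] at h5
        nlinarith
      have h5 : ((m : ℝ) + 1) * B.e m ≤ B.a m := by exact_mod_cast B.sparse m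
      have h6 : (B.a m : ℝ) ≤ lo r := by exact_mod_cast hm.le
      have h7 : (lo r : ℝ) ≤ -Real.logb 2 r :=
        Nat.floor_le (neg_logb_nonneg hr (hrR.trans_lt hR))
      have h8 : -Real.logb 2 R ≤ hi R := Nat.le_ceil _
      have h9 := neg_logb_nonneg hR0 hR
      have h10 : (1 : ℝ) ≤ d := by exact_mod_cast hd
      have h11 : δ ≤ 1 := min_le_right _ _
      have h12 : (d : ℝ) * B.e m ≤ δ * -Real.logb 2 r :=
        calc (d : ℝ) * B.e m ≤ δ * (m + 1) * B.e m := by gcongr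
          _ = δ * ((m + 1) * B.e m) := by ring
          _ ≤ δ * -Real.logb 2 r := by gcongr; linarith
      have h13 : δ * -Real.logb 2 R ≤ d * hi R :=
        mul_le_mul (h11.trans h10) h8 h9 (by positivity)
      linarith
  calc _ ≤ 5 ^ d * 2 ^ (5 * d) * 5 ^ d * (C * (R / r) ^ s) *
        (2 ^ (d * B.e K) * (R / r) ^ δ) := by gcongr
    _ = _ := by
        rw [Real.rpow_add (by positivity)]
        ring

/-- If `M` had smaller `φ i`-Assouad dimension than `F`, the blocks aiming at index `i` and an
exponent above that dimension would contain too many cells of `F`. -/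
lemma le_phiAssouad_moran (hd : 0 < d) {φ : ℕ → ℝ → ℝ} (hφ : ∀ i, IsDimFunction (φ i))
    (hB : ∀ k, ∃ R ∈ Set.Ioo (0 : ℝ) 1, B.a k = lo R ∧
      B.b k = hi (R ^ (1 + φ k.unpair.1 R)) ∧
      (0 ≤ target F φ k →
        k * R ^ (-(φ k.unpair.1 R * target F φ k)) ≤ B.cnt k (B.b k))) (i : ℕ) :
    phiAssouad F (φ i) ≤ phiAssouad B.moran (φ i) := by
  refine le_phiAssouad (hφ i) fun s C hs hC h => ?_
  by_contra! hlt
  obtain ⟨x, hx⟩ := B.moran_nonempty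
  set D : ℝ := 2 ^ d * (5 ^ d * 2 ^ (3 * d) * C)
  obtain ⟨n₁, hn₁⟩ := exists_nat_one_div_lt (sub_pos.2 hlt)
  obtain ⟨n₂, hn₂⟩ := exists_nat_gt D
  -- `n₁` makes the target exceed `s`, and `n₂` makes the constant `k` of the block exceed `D`
  set n := max n₁ n₂
  set k := Nat.pair i n
  have hk1 : k.unpair.1 = i := by simp [k]
  have hk2 : k.unpair.2 = n := by simp [k]
  have hkn : n₂ ≤ k := (le_max_right _ _).trans (Nat.right_le_pair i n)
  obtain ⟨R, hR, ha, hb, hcnt⟩ := hB k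
  have htar : s ≤ target F φ k := by
    rw [target, hk1, hk2]
    have : (1 : ℝ) / (n + 1) ≤ 1 / (n₁ + 1) := by
      have : (n₁ : ℝ) ≤ n := by exact_mod_cast le_max_left n₁ n₂
      gcongr
    linarith
  have hcnt := hcnt (hs.trans htar)
  rw [hk1] at hb hcnt
  have hφR := (hφ i).1 R hR
  have hr := Real.rpow_pos_of_pos hR.1 (1 + φ i R)
  have hRp := Real.rpow_pos_of_pos hR.1 (-(φ i R * s))
  have h1 := B.le_of_coverNumber_moran_le hr ((hφ i).rpow_le hR) hR.2
    (by positivity) hx (h R hR x hx)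
  rw [← ha, ← hb] at h1
  have h2 := B.cnt_end_le hd k
  have h3 : (B.cnt k (B.b k) : ℝ) ≤ D * R ^ (-(φ i R * s)) := by
    have hp : (0 : ℝ) < 2 ^ (d * B.c (B.a k)) := by positivity
    refine le_of_mul_le_mul_right ?_ hp
    refine h2.trans ((mul_le_mul_of_nonneg_left h1 (by positivity)).trans (le_of_eq ?_))
    simp only [D]
    ring
  have h4 : R ^ (-(φ i R * s)) ≤ R ^ (-(φ i R * target F φ k)) :=
    Real.rpow_le_rpow_of_exponent_ge hR.1 hR.2.le (by
      have := mul_le_mul_of_nonneg_left htar hφR.le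
      linarith)
  have h5 : (k : ℝ) * R ^ (-(φ i R * s)) ≤ D * R ^ (-(φ i R * s)) :=
    (mul_le_mul_of_nonneg_left h4 (Nat.cast_nonneg _)).trans (hcnt.trans h3)
  have h6 : (k : ℝ) ≤ D := le_of_mul_le_mul_right h5 hRp
  have h7 : (n₂ : ℝ) ≤ k := by exact_mod_cast hkn
  linarith

end Blocks

theorem statement10 (d : ℕ) (F : Set (Fin d → ℝ)) (hF : F.Nonempty) (hFb : IsBounded F)
    (φ : ℕ → ℝ → ℝ) (hφ : ∀ i, IsDimFunction (φ i)) :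
    ∃ M : Set (Fin d → ℝ), IsHomogeneousMoran d M ∧
      (∀ i : ℕ, phiAssouad F (φ i) = phiAssouad M (φ i)) ∧
      assouadDim M ≤ assouadDim F := by
  rcases Nat.eq_zero_or_pos d with rfl | hd
  · -- `Fin 0 → ℝ` is a single point, so `F` is itself a Moran set
    have hr : ∀ n : ℕ, 0 < (fun _ => 1 / 2 : ℕ → ℝ) n ∧ (fun _ => 1 / 2 : ℕ → ℝ) n ≤ 1 / 2 :=
      fun n => by norm_num
    have hM : moranSet 0 (fun _ => 1 / 2) = F :=
      (Subsingleton.eq_univ_of_nonempty (moranSet_nonempty hr)).trans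
        (Subsingleton.eq_univ_of_nonempty hF).symm
    exact ⟨F, ⟨_, hr, hM.symm⟩, fun _ => rfl, le_rfl⟩
  · obtain ⟨B, hB⟩ := exists_blocks hF hφ
    exact ⟨B.moran, B.isHomogeneousMoran,
      fun i => le_antisymm (B.le_phiAssouad_moran hd hφ hB i)
        (B.phiAssouad_moran_le hd hF (hφ i)), B.assouadDim_moran_le hd hF⟩
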